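/- arXiv:2203.01740 — 2 statements merged into one kernel-verified Lean document; each statement's English description precedes it below -/
import Mathlib

section
/- Let w₁, w₂ > 0 with w₂ ≤ w₁ ≤ σ·w₂, where σ is the unique positive real root of x⁴ − 3·x² − 3·x − 1 (σ ≈ 2.1479). There exist a symmetric weighted two-player congestion game with weights w₁, w₂ and proportional costs, a pure Nash equilibrium A, and an action profile B such that C(B) > 0 and C(A) = ((2·w₁⁴ + 6·w₁³·w₂ + 8·w₁²·w₂² + 6·w₁·w₂³ + 2·w₂⁴)/(2·w₁⁴ + 3·w₁³·w₂ + 4·w₁²·w₂² + 4·w₁·w₂³ + 2·w₂⁴)) · C(B). -/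
open Finset Real

/-- A weighted two-player congestion game with weights `w₁, w₂`:
a finite set of resources `Fin n`, nonempty finite collections of actions
(subsets of resources) for each player, and nonnegative affine cost
coefficients `α r`, `β r` for each resource. -/
structure CGame (w₁ w₂ : ℝ) where
  n : ℕ
  A1 : Finset (Finset (Fin n))
  A2 : Finset (Finset (Fin n))
  A1_nonempty : A1.Nonempty
  A2_nonempty : A2.Nonempty
  α : Fin n → ℝ
  β : Fin n → ℝ
  α_nonneg : ∀ r, 0 ≤ α r
  β_nonneg : ∀ r, 0 ≤ β r

namespace CGame

variable {w₁ w₂ : ℝ}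

/-- The load of resource `r` under the action profile `(a₁, a₂)`. -/
def load (G : CGame w₁ w₂) (a₁ a₂ : Finset (Fin G.n)) (r : Fin G.n) : ℝ :=
  (if r ∈ a₁ then w₁ else 0) + (if r ∈ a₂ then w₂ else 0)

/-- Uniform cost of player 1. -/
def C1uni (G : CGame w₁ w₂) (a₁ a₂ : Finset (Fin G.n)) : ℝ :=
  ∑ r ∈ a₁, (G.α r + G.β r * G.load a₁ a₂ r)

/-- Uniform cost of player 2. -/
def C2uni (G : CGame w₁ w₂) (a₁ a₂ : Finset (Fin G.n)) : ℝ :=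
  ∑ r ∈ a₂, (G.α r + G.β r * G.load a₁ a₂ r)

/-- Uniform social cost. -/
def Cuni (G : CGame w₁ w₂) (a₁ a₂ : Finset (Fin G.n)) : ℝ :=
  G.C1uni a₁ a₂ + G.C2uni a₁ a₂

/-- Proportional cost of player 1. -/
def C1prop (G : CGame w₁ w₂) (a₁ a₂ : Finset (Fin G.n)) : ℝ :=
  w₁ * ∑ r ∈ a₁, (G.α r + G.β r * G.load a₁ a₂ r)

/-- Proportional cost of player 2. -/
def C2prop (G : CGame w₁ w₂) (a₁ a₂ : Finset (Fin G.n)) : ℝ :=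
  w₂ * ∑ r ∈ a₂, (G.α r + G.β r * G.load a₁ a₂ r)

/-- Proportional social cost. -/
def Cprop (G : CGame w₁ w₂) (a₁ a₂ : Finset (Fin G.n)) : ℝ :=
  G.C1prop a₁ a₂ + G.C2prop a₁ a₂

/-- `(a₁, a₂)` is an action profile: each action is admissible for its player. -/
def IsProfile (G : CGame w₁ w₂) (a₁ a₂ : Finset (Fin G.n)) : Prop :=
  a₁ ∈ G.A1 ∧ a₂ ∈ G.A2

/-- The game is symmetric if both players have the same actions. -/
def Symm (G : CGame w₁ w₂) : Prop := G.A1 = G.A2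

/-- Pure Nash equilibrium for uniform costs. -/
def IsNashUni (G : CGame w₁ w₂) (a₁ a₂ : Finset (Fin G.n)) : Prop :=
  G.IsProfile a₁ a₂ ∧
  (∀ b₁ ∈ G.A1, G.C1uni a₁ a₂ ≤ G.C1uni b₁ a₂) ∧
  (∀ b₂ ∈ G.A2, G.C2uni a₁ a₂ ≤ G.C2uni a₁ b₂)

/-- Pure Nash equilibrium for proportional costs. -/
def IsNashProp (G : CGame w₁ w₂) (a₁ a₂ : Finset (Fin G.n)) : Prop :=
  G.IsProfile a₁ a₂ ∧
  (∀ b₁ ∈ G.A1, G.C1prop a₁ a₂ ≤ G.C1prop b₁ a₂) ∧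
  (∀ b₂ ∈ G.A2, G.C2prop a₁ a₂ ≤ G.C2prop a₁ b₂)

/-- Subgame-perfect outcome with player 1 moving first, uniform costs. -/
def IsSPE1Uni (G : CGame w₁ w₂) (a₁ a₂ : Finset (Fin G.n)) : Prop :=
  G.IsProfile a₁ a₂ ∧
  ∃ b : Finset (Fin G.n) → Finset (Fin G.n),
    (∀ x ∈ G.A1, b x ∈ G.A2) ∧
    (∀ x ∈ G.A1, ∀ y ∈ G.A2, G.C2uni x (b x) ≤ G.C2uni x y) ∧
    a₂ = b a₁ ∧
    (∀ x ∈ G.A1, G.C1uni a₁ a₂ ≤ G.C1uni x (b x))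

/-- Subgame-perfect outcome with player 2 moving first, uniform costs. -/
def IsSPE2Uni (G : CGame w₁ w₂) (a₁ a₂ : Finset (Fin G.n)) : Prop :=
  G.IsProfile a₁ a₂ ∧
  ∃ b : Finset (Fin G.n) → Finset (Fin G.n),
    (∀ x ∈ G.A2, b x ∈ G.A1) ∧
    (∀ x ∈ G.A2, ∀ y ∈ G.A1, G.C1uni (b x) x ≤ G.C1uni y x) ∧
    a₁ = b a₂ ∧
    (∀ x ∈ G.A2, G.C2uni a₁ a₂ ≤ G.C2uni (b x) x)

/-- Subgame-perfect outcome with player 1 moving first, proportional costs. -/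
def IsSPE1Prop (G : CGame w₁ w₂) (a₁ a₂ : Finset (Fin G.n)) : Prop :=
  G.IsProfile a₁ a₂ ∧
  ∃ b : Finset (Fin G.n) → Finset (Fin G.n),
    (∀ x ∈ G.A1, b x ∈ G.A2) ∧
    (∀ x ∈ G.A1, ∀ y ∈ G.A2, G.C2prop x (b x) ≤ G.C2prop x y) ∧
    a₂ = b a₁ ∧
    (∀ x ∈ G.A1, G.C1prop a₁ a₂ ≤ G.C1prop x (b x))

/-- Subgame-perfect outcome with player 2 moving first, proportional costs. -/
def IsSPE2Prop (G : CGame w₁ w₂) (a₁ a₂ : Finset (Fin G.n)) : Prop :=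
  G.IsProfile a₁ a₂ ∧
  ∃ b : Finset (Fin G.n) → Finset (Fin G.n),
    (∀ x ∈ G.A2, b x ∈ G.A1) ∧
    (∀ x ∈ G.A2, ∀ y ∈ G.A1, G.C1prop (b x) x ≤ G.C1prop y x) ∧
    a₁ = b a₂ ∧
    (∀ x ∈ G.A2, G.C2prop a₁ a₂ ≤ G.C2prop (b x) x)

end CGame

/-- The symmetric game with five resources and four actions whose price of anarchy attains the
lower bound: `{2, 3, 4}` and `{0, 1, 4}` form the equilibrium, `{1, 3, 4}` and `{0, 2}` the
cheaper profile. -/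
noncomputable abbrev lowerBoundGame (w₁ w₂ : ℝ) (h₁ : 0 ≤ w₁) (h₂ : 0 ≤ w₂) : CGame w₁ w₂ where
  n := 5
  A1 := {{2, 3, 4}, {0, 1, 4}, {1, 3, 4}, {0, 2}}
  A2 := {{2, 3, 4}, {0, 1, 4}, {1, 3, 4}, {0, 2}}
  A1_nonempty := Finset.insert_nonempty _ _
  A2_nonempty := Finset.insert_nonempty _ _
  α := fun _ => 0
  β := ![(w₁ + w₂) ^ 2, w₁ * (w₁ + w₂), (w₁ + w₂) ^ 2, w₂ * (w₁ + w₂),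
    w₁ ^ 2 + w₁ * w₂ + w₂ ^ 2]
  α_nonneg := fun _ => le_rfl
  β_nonneg := by
    intro r
    fin_cases r <;> simp <;> positivity

namespace lowerBoundGame

variable {w₁ w₂ : ℝ} (h₁ : 0 ≤ w₁) (h₂ : 0 ≤ w₂) (a b : Finset (Fin 5))

theorem C1prop_eq : (lowerBoundGame w₁ w₂ h₁ h₂).C1prop a b =
    w₁ * ∑ r : Fin 5, if r ∈ a then
      (![(w₁ + w₂) ^ 2, w₁ * (w₁ + w₂), (w₁ + w₂) ^ 2, w₂ * (w₁ + w₂),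
        w₁ ^ 2 + w₁ * w₂ + w₂ ^ 2] : Fin 5 → ℝ) r * (w₁ + if r ∈ b then w₂ else 0) else 0 := by
  rw [← Finset.sum_filter, Finset.filter_univ_mem]
  change w₁ * ∑ r ∈ a, _ = _
  congr 1
  refine Finset.sum_congr rfl fun r hr => ?_
  change 0 + _ * ((if r ∈ a then w₁ else 0) + if r ∈ b then w₂ else 0) = _
  rw [if_pos hr, zero_add]

theorem C2prop_eq : (lowerBoundGame w₁ w₂ h₁ h₂).C2prop a b =
    w₂ * ∑ r : Fin 5, if r ∈ b then
      (![(w₁ + w₂) ^ 2, w₁ * (w₁ + w₂), (w₁ + w₂) ^ 2, w₂ * (w₁ + w₂),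
        w₁ ^ 2 + w₁ * w₂ + w₂ ^ 2] : Fin 5 → ℝ) r * ((if r ∈ a then w₁ else 0) + w₂) else 0 := by
  rw [← Finset.sum_filter, Finset.filter_univ_mem]
  change w₂ * ∑ r ∈ b, _ = _
  congr 1
  refine Finset.sum_congr rfl fun r hr => ?_
  change 0 + _ * ((if r ∈ a then w₁ else 0) + if r ∈ b then w₂ else 0) = _
  rw [if_pos hr, zero_add]

theorem Cprop_equilibrium :
    (lowerBoundGame w₁ w₂ h₁ h₂).Cprop
      ({2, 3, 4} : Finset (Fin 5)) ({0, 1, 4} : Finset (Fin 5)) =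
    2 * w₁ ^ 4 + 6 * w₁ ^ 3 * w₂ + 8 * w₁ ^ 2 * w₂ ^ 2 + 6 * w₁ * w₂ ^ 3 + 2 * w₂ ^ 4 := by
  rw [CGame.Cprop, C1prop_eq, C2prop_eq]
  simp [Fin.sum_univ_five]
  ring

theorem Cprop_optimum :
    (lowerBoundGame w₁ w₂ h₁ h₂).Cprop
      ({1, 3, 4} : Finset (Fin 5)) ({0, 2} : Finset (Fin 5)) =
    2 * w₁ ^ 4 + 3 * w₁ ^ 3 * w₂ + 4 * w₁ ^ 2 * w₂ ^ 2 + 4 * w₁ * w₂ ^ 3 + 2 * w₂ ^ 4 := by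
  rw [CGame.Cprop, C1prop_eq, C2prop_eq]
  simp [Fin.sum_univ_five]
  ring

theorem isNashProp :
    (lowerBoundGame w₁ w₂ h₁ h₂).IsNashProp
      ({2, 3, 4} : Finset (Fin 5)) ({0, 1, 4} : Finset (Fin 5)) := by
  refine ⟨⟨?_, ?_⟩, fun b hb => ?_, fun b hb => ?_⟩
  · simp [lowerBoundGame]
  · simp [lowerBoundGame]
  · change b ∈ ({{2, 3, 4}, {0, 1, 4}, {1, 3, 4}, {0, 2}} : Finset (Finset (Fin 5))) at hb
    simp only [Finset.mem_insert, Finset.mem_singleton] at hb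
    rw [C1prop_eq, C1prop_eq]
    refine mul_le_mul_of_nonneg_left ?_ h₁
    rcases hb with rfl | rfl | rfl | rfl <;> simp [Fin.sum_univ_five] <;> rw [← sub_nonneg] <;>
      ring_nf <;> positivity
  · change b ∈ ({{2, 3, 4}, {0, 1, 4}, {1, 3, 4}, {0, 2}} : Finset (Finset (Fin 5))) at hb
    simp only [Finset.mem_insert, Finset.mem_singleton] at hb
    rw [C2prop_eq, C2prop_eq]
    refine mul_le_mul_of_nonneg_left ?_ h₂
    rcases hb with rfl | rfl | rfl | rfl <;> simp [Fin.sum_univ_five] <;> rw [← sub_nonneg] <;>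
      ring_nf <;> positivity

end lowerBoundGame

/-- matching lower-bound instance for symmetric simultaneous
proportionally weighted games, case `w₂ ≤ w₁ ≤ σw₂`. -/
theorem poa_sym_prop_lower_mid (w₁ w₂ : ℝ) (h₁ : 0 < w₁) (h₂ : 0 < w₂) (σ : ℝ)
    (hσpos : 0 < σ) (hσroot : σ ^ 4 - 3 * σ ^ 2 - 3 * σ - 1 = 0)
    (hσuniq : ∀ x : ℝ, 0 < x → x ^ 4 - 3 * x ^ 2 - 3 * x - 1 = 0 → x = σ)
    (hlo : w₂ ≤ w₁) (hhi : w₁ ≤ σ * w₂) :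
    ∃ (G : CGame w₁ w₂), G.Symm ∧
      ∃ a₁ a₂ b₁ b₂ : Finset (Fin G.n),
        G.IsNashProp a₁ a₂ ∧ G.IsProfile b₁ b₂ ∧ 0 < G.Cprop b₁ b₂ ∧
        G.Cprop a₁ a₂ =
          ((2 * w₁ ^ 4 + 6 * w₁ ^ 3 * w₂ + 8 * w₁ ^ 2 * w₂ ^ 2 + 6 * w₁ * w₂ ^ 3 +
              2 * w₂ ^ 4) /
            (2 * w₁ ^ 4 + 3 * w₁ ^ 3 * w₂ + 4 * w₁ ^ 2 * w₂ ^ 2 + 4 * w₁ * w₂ ^ 3 +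
              2 * w₂ ^ 4)) * G.Cprop b₁ b₂ := by
  refine ⟨lowerBoundGame w₁ w₂ h₁.le h₂.le, rfl, ({2, 3, 4} : Finset (Fin 5)),
    ({0, 1, 4} : Finset (Fin 5)), ({1, 3, 4} : Finset (Fin 5)), ({0, 2} : Finset (Fin 5)),
    lowerBoundGame.isNashProp h₁.le h₂.le, ?_, ?_, ?_⟩
  · constructor <;> simp [lowerBoundGame]
  · rw [lowerBoundGame.Cprop_optimum]
    positivity
  · rw [lowerBoundGame.Cprop_optimum, lowerBoundGame.Cprop_equilibrium]
    exact (div_mul_cancel₀ _ (by positivity)).symm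
end

section
/- In every weighted two-player congestion game with weights w₁, w₂ ≥ 0, w₁ + w₂ > 0, and uniform costs, every subgame-perfect outcome A (with either player moving first) and every action profile B satisfy C(A) ≤ 2 · C(B). Moreover, for every ε > 0 there exist such a game (for suitable weights), a subgame-perfect outcome A with player 1 moving first, and an action profile B with C(B) > 0 and C(A) > (2 − ε) · C(B). -/
open Finset Real

namespace CGame

variable {w₁ w₂ : ℝ}

/-- The same game with the roles of the two players exchanged. -/
def swap (G : CGame w₁ w₂) : CGame w₂ w₁ where
  n := G.n
  A1 := G.A2
  A2 := G.A1
  A1_nonempty := G.A2_nonempty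
  A2_nonempty := G.A1_nonempty
  α := G.α
  β := G.β
  α_nonneg := G.α_nonneg
  β_nonneg := G.β_nonneg

theorem C1uni_swap (G : CGame w₁ w₂) (a₁ a₂ : Finset (Fin G.n)) :
    G.swap.C1uni a₂ a₁ = G.C2uni a₁ a₂ :=
  Finset.sum_congr rfl fun r _ =>
    congrArg (fun t => G.α r + G.β r * t) (add_comm _ _)

theorem C2uni_swap (G : CGame w₁ w₂) (a₁ a₂ : Finset (Fin G.n)) :
    G.swap.C2uni a₂ a₁ = G.C1uni a₁ a₂ :=
  Finset.sum_congr rfl fun r _ =>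
    congrArg (fun t => G.α r + G.β r * t) (add_comm _ _)

theorem Cuni_swap (G : CGame w₁ w₂) (a₁ a₂ : Finset (Fin G.n)) :
    G.swap.Cuni a₂ a₁ = G.Cuni a₁ a₂ := by
  unfold Cuni
  rw [C1uni_swap, C2uni_swap, add_comm]

theorem IsSPE2Uni.swap {G : CGame w₁ w₂} {a₁ a₂ : Finset (Fin G.n)}
    (h : G.IsSPE2Uni a₁ a₂) : G.swap.IsSPE1Uni a₂ a₁ := by
  obtain ⟨⟨h₁, h₂⟩, b, hb, hbest, heq, hopt⟩ := h
  refine ⟨⟨h₂, h₁⟩, b, hb, fun x hx y hy => ?_, heq, fun x hx => ?_⟩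
  · exact (G.C2uni_swap (b x) x).trans_le
      ((hbest x hx y hy).trans_eq (G.C2uni_swap y x).symm)
  · exact (G.C1uni_swap a₁ a₂).trans_le
      ((hopt x hx).trans_eq (G.C1uni_swap (b x) x).symm)

theorem C1uni_eq_sum_univ (G : CGame w₁ w₂) (a₁ a₂ : Finset (Fin G.n)) :
    G.C1uni a₁ a₂ =
      ∑ r, if r ∈ a₁ then G.α r + G.β r * (w₁ + if r ∈ a₂ then w₂ else 0) else 0 := by
  rw [Finset.sum_ite_mem, Finset.univ_inter]
  exact Finset.sum_congr rfl fun r hr => by simp [load, hr]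

theorem C2uni_eq_sum_univ (G : CGame w₁ w₂) (a₁ a₂ : Finset (Fin G.n)) :
    G.C2uni a₁ a₂ =
      ∑ r, if r ∈ a₂ then G.α r + G.β r * ((if r ∈ a₁ then w₁ else 0) + w₂) else 0 := by
  rw [Finset.sum_ite_mem, Finset.univ_inter]
  exact Finset.sum_congr rfl fun r hr => by simp [load, hr]

/-- Smoothness inequality for a first mover that is at most as heavy as the second mover. -/
theorem C2uni_add_C1uni_le_of_le (G : CGame w₁ w₂) (h₁ : 0 ≤ w₁) (hw : w₁ ≤ w₂)
    (a₁ b₁ b₂ c : Finset (Fin G.n)) :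
    G.C2uni a₁ c + G.C1uni b₁ c ≤ 2 * G.C1uni b₁ b₂ + 2 * G.C2uni b₁ c := by
  simp only [C1uni_eq_sum_univ, C2uni_eq_sum_univ, Finset.mul_sum, ← Finset.sum_add_distrib]
  refine Finset.sum_le_sum fun r _ => ?_
  have hα := G.α_nonneg r
  have hβ₁ := mul_nonneg (G.β_nonneg r) h₁
  have hβ := mul_le_mul_of_nonneg_left hw (G.β_nonneg r)
  split_ifs <;> linarith

/-- Smoothness inequality for a first mover that is at least as heavy as the second mover. -/
theorem C2uni_add_two_mul_C1uni_le_of_ge (G : CGame w₁ w₂) (h₂ : 0 ≤ w₂) (hw : w₂ ≤ w₁)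
    (a₁ a₂ b₁ b₂ c : Finset (Fin G.n)) :
    G.C2uni a₁ c + 2 * G.C1uni b₁ c ≤
      2 * G.C1uni b₁ b₂ + 2 * G.C2uni b₁ c + G.C1uni a₁ a₂ := by
  simp only [C1uni_eq_sum_univ, C2uni_eq_sum_univ, Finset.mul_sum, ← Finset.sum_add_distrib]
  refine Finset.sum_le_sum fun r _ => ?_
  have hα := G.α_nonneg r
  have hβ₂ := mul_nonneg (G.β_nonneg r) h₂
  have hβ := mul_le_mul_of_nonneg_left hw (G.β_nonneg r)
  split_ifs <;> linarith

theorem IsSPE1Uni.Cuni_le {G : CGame w₁ w₂} (h₁ : 0 ≤ w₁) (h₂ : 0 ≤ w₂)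
    {a₁ a₂ b₁ b₂ : Finset (Fin G.n)} (h : G.IsSPE1Uni a₁ a₂) (hB : G.IsProfile b₁ b₂) :
    G.Cuni a₁ a₂ ≤ 2 * G.Cuni b₁ b₂ := by
  obtain ⟨⟨ha₁, -⟩, b, hb, hbest, rfl, hopt⟩ := h
  have hreply := hbest a₁ ha₁ (b b₁) (hb b₁ hB.1)
  have hreply' := hbest b₁ hB.1 b₂ hB.2
  have hfirst := hopt b₁ hB.1
  unfold Cuni
  rcases le_total w₁ w₂ with hw | hw
  · linarith [G.C2uni_add_C1uni_le_of_le h₁ hw a₁ b₁ b₂ (b b₁)]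
  · linarith [G.C2uni_add_two_mul_C1uni_le_of_ge h₂ hw a₁ (b a₁) b₁ b₂ (b b₁)]

theorem C1uni_singleton (G : CGame w₁ w₂) (i j : Fin G.n) :
    G.C1uni {i} {j} = G.α i + G.β i * (w₁ + if i = j then w₂ else 0) := by
  simp [C1uni, load]

theorem C2uni_singleton (G : CGame w₁ w₂) (i j : Fin G.n) :
    G.C2uni {i} {j} = G.α j + G.β j * ((if j = i then w₁ else 0) + w₂) := by
  simp [C2uni, load]

/-- A game on which the bound `2` is attained: the first mover is weightless, the second mover
is indifferent between resources `0` and `1`, and resource `2` has constant cost. -/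
abbrev tight : CGame 0 1 where
  n := 3
  A1 := {{0}, {2}}
  A2 := {{0}, {1}}
  A1_nonempty := Finset.insert_nonempty _ _
  A2_nonempty := Finset.insert_nonempty _ _
  α := ![0, 0, 1]
  β := ![1, 1, 0]
  α_nonneg r := by fin_cases r <;> simp
  β_nonneg r := by fin_cases r <;> simp

theorem tight_isSPE1Uni : tight.IsSPE1Uni {2} {0} := by
  have hA1 : ∀ x ∈ tight.A1, x = {0} ∨ x = {2} :=
    fun x hx => by simpa [tight] using hx
  have hA2 : ∀ x ∈ tight.A2, x = {0} ∨ x = {1} :=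
    fun x hx => by simpa [tight] using hx
  have h₀ : {0} ∈ tight.A2 := Finset.mem_insert_self _ _
  refine ⟨⟨Finset.mem_insert_of_mem (Finset.mem_singleton_self _), h₀⟩,
    fun _ => {0}, fun _ _ => h₀, fun x hx y hy => ?_, rfl, fun x hx => ?_⟩
  · rcases hA1 x hx with rfl | rfl <;> rcases hA2 y hy with rfl | rfl <;>
      refine (tight.C2uni_singleton _ _).trans_le
        (le_of_le_of_eq ?_ (tight.C2uni_singleton _ _).symm) <;> simp
  · rcases hA1 x hx with rfl | rfl <;>
      refine (tight.C1uni_singleton _ _).trans_le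
        (le_of_le_of_eq ?_ (tight.C1uni_singleton _ _).symm) <;> simp

end CGame

/-- the sequential price of anarchy for uniformly weighted
two-player congestion games is at most `2`, and `2` is approached by
suitable instances. -/
theorem poa_seq_uniform_two :
    (∀ w₁ w₂ : ℝ, 0 ≤ w₁ → 0 ≤ w₂ → 0 < w₁ + w₂ →
      ∀ (G : CGame w₁ w₂) (a₁ a₂ b₁ b₂ : Finset (Fin G.n)),
        (G.IsSPE1Uni a₁ a₂ ∨ G.IsSPE2Uni a₁ a₂) → G.IsProfile b₁ b₂ →
        G.Cuni a₁ a₂ ≤ 2 * G.Cuni b₁ b₂) ∧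
    (∀ ε : ℝ, 0 < ε →
      ∃ (w₁ w₂ : ℝ), 0 ≤ w₁ ∧ 0 ≤ w₂ ∧ 0 < w₁ + w₂ ∧
        ∃ (G : CGame w₁ w₂) (a₁ a₂ b₁ b₂ : Finset (Fin G.n)),
          G.IsSPE1Uni a₁ a₂ ∧ G.IsProfile b₁ b₂ ∧ 0 < G.Cuni b₁ b₂ ∧
          (2 - ε) * G.Cuni b₁ b₂ < G.Cuni a₁ a₂) := by
  refine ⟨fun w₁ w₂ h₁ h₂ _ G a₁ a₂ b₁ b₂ hA hB => ?_, fun ε hε => ?_⟩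
  · rcases hA with hA | hA
    · exact hA.Cuni_le h₁ h₂ hB
    · have h := hA.swap.Cuni_le h₂ h₁ (b₁ := b₂) (b₂ := b₁) ⟨hB.2, hB.1⟩
      rwa [CGame.Cuni_swap, CGame.Cuni_swap] at h
  · have hB : CGame.tight.Cuni {0} {1} = 1 := by
      unfold CGame.Cuni
      rw [CGame.C1uni_singleton, CGame.C2uni_singleton]
      simp
    have hA : CGame.tight.Cuni {2} {0} = 2 := by
      unfold CGame.Cuni
      rw [CGame.C1uni_singleton, CGame.C2uni_singleton]
      change (1 : ℝ) + 0 * (0 + 0) + (0 + 1 * (0 + 1)) = 2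
      norm_num
    refine ⟨0, 1, le_rfl, zero_le_one, by norm_num, CGame.tight, {2},
      {0}, {0}, {1},
      CGame.tight_isSPE1Uni, ⟨Finset.mem_insert_self _ _,
        Finset.mem_insert_of_mem (Finset.mem_singleton_self _)⟩, ?_, ?_⟩
    · rw [hB]
      exact one_pos
    · rw [hA, hB]
      linarith
end
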